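/- There is a universal constant c > 0 such that the following holds. Let G be the ℓ×ℓ grid, let δ ≥ 1 be an integer, and let M be a set of demand pairs, with all sources distinct and all destinations distinct, such that every source of M lies at distance at most δ from the boundary Γ(G). For each source s, let s̃ be a fixed vertex of Γ(G) at minimum distance from s, and let M̃ = {(s̃,t) : (s,t) ∈ M}. Then OPT(G,M̃) ≥ c·OPT(G,M)/δ. -/

import Mathlib

/-!
The constant is `c = 1/3`. Fix an optimal routing `P` of `k` pairs of `M`, and for every routed
pair `(s, t)` a shortest path `Q` from `s` to its relocated source `s̃`. Since `s̃` is a nearest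
boundary vertex, `Q` is a straight segment with at most `δ + 1` vertices, one of which is `s` itself.

Say that pair `i` hits pair `j ≠ i` if `Q i` meets `P j`. The paths `P j` are disjoint and `s` lies on
`P i`, so each pair hits at most `δ` others (`card_hit_le`); hence some `k / (2δ + 1)` pairs do not
hit each other (`exists_independent`). Two of the segments can only meet if one of them contains the
source of the other (`box_inter`), which is a hit already. So for the selected pairs the unions
`Q i ∪ P i` are pairwise disjoint, and each contains a path from `s̃` to `t`.
-/

open Finset

abbrev Vtx := ℕ × ℕ
abbrev DPair := Vtx × Vtx

/-- The grid graph on rows `r₁..r₂` and columns `c₁..c₂` (vertices outside are isolated). -/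
def rectGrid (r₁ r₂ c₁ c₂ : ℕ) : SimpleGraph Vtx :=
  SimpleGraph.fromRel (fun u v =>
    r₁ ≤ u.1 ∧ u.1 ≤ r₂ ∧ c₁ ≤ u.2 ∧ u.2 ≤ c₂ ∧
    r₁ ≤ v.1 ∧ v.1 ≤ r₂ ∧ c₁ ≤ v.2 ∧ v.2 ≤ c₂ ∧
    ((u.1 = v.1 ∧ u.2 + 1 = v.2) ∨ (u.2 = v.2 ∧ u.1 + 1 = v.1)))

/-- The ℓ×ℓ grid graph. -/
def gridG (ℓ : ℕ) : SimpleGraph Vtx := rectGrid 1 ℓ 1 ℓ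

/-- The demand pairs of `M` can be simultaneously routed via node-disjoint paths in `G`. -/
def NodeDisjointRoutable {V : Type*} (G : SimpleGraph V) (M : Finset (V × V)) : Prop :=
  ∃ P : ∀ m : {m // m ∈ M}, G.Walk m.val.1 m.val.2,
    (∀ m, (P m).IsPath) ∧
    ∀ m m' : {m // m ∈ M}, m ≠ m' → ∀ x, x ∈ (P m).support → x ∉ (P m').support

def OnTopRow (ℓ : ℕ) (v : Vtx) : Prop := v.1 = 1 ∧ 1 ≤ v.2 ∧ v.2 ≤ ℓ

def OnBoundary (ℓ : ℕ) (v : Vtx) : Prop :=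
  1 ≤ v.1 ∧ v.1 ≤ ℓ ∧ 1 ≤ v.2 ∧ v.2 ≤ ℓ ∧ (v.1 = 1 ∨ v.1 = ℓ ∨ v.2 = 1 ∨ v.2 = ℓ)

def DistinctSources (M : Finset DPair) : Prop := ∀ m ∈ M, ∀ m' ∈ M, m.1 = m'.1 → m = m'
def DistinctDests (M : Finset DPair) : Prop := ∀ m ∈ M, ∀ m' ∈ M, m.2 = m'.2 → m = m'

noncomputable def lg (n : ℕ) : ℝ := Real.logb 2 n

def IsIntervalIn (W : ℕ) (I : Finset ℕ) : Prop :=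
  ∃ a b : ℕ, 1 ≤ a ∧ a ≤ b ∧ b ≤ W ∧ I = Finset.Icc a b

def IntSeparated (d : ℕ) (I J : Finset ℕ) : Prop :=
  ∀ i ∈ I, ∀ j ∈ J, (d : ℤ) < |(i : ℤ) - (j : ℤ)|

def IsCanonicalIntervals (W d : ℕ) (Is : Finset (Finset ℕ)) : Prop :=
  (∀ I ∈ Is, IsIntervalIn W I ∧ I.card = d) ∧
    ∀ I ∈ Is, ∀ J ∈ Is, I ≠ J → IntSeparated d I J

abbrev SquareSpec := Finset ℕ × Finset ℕ

def memSquare (v : Vtx) (Q : SquareSpec) : Prop := v.1 ∈ Q.1 ∧ v.2 ∈ Q.2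

instance (v : Vtx) (Q : SquareSpec) : Decidable (memSquare v Q) := by
  unfold memSquare; infer_instance

def IsCanonicalSquares (W d : ℕ) (Qs : Finset SquareSpec) : Prop :=
  ∃ I₁ I₂ : Finset (Finset ℕ),
    IsCanonicalIntervals W d I₁ ∧ IsCanonicalIntervals W d I₂ ∧ Qs = I₁ ×ˢ I₂

/-- The number of sources of `M` lying on the shadow of the square `Q` with respect to `M`,
i.e. on the shortest sub-path of the top row containing all sources of pairs of `M` whose
destination lies in `Q`. -/
def shadowCount (M : Finset DPair) (Q : SquareSpec) : ℕ :=
  (M.filter (fun m => ∃ m₁ ∈ M, memSquare m₁.2 Q ∧ ∃ m₂ ∈ M, memSquare m₂.2 Q ∧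
      m₁.1.2 ≤ m.1.2 ∧ m.1.2 ≤ m₂.1.2)).card

/-- The square `Q` (of side `d`) has the β-shadow property with respect to `M`. -/
def HasShadowProp (β : ℝ) (d : ℕ) (M : Finset DPair) (Q : SquareSpec) : Prop :=
  (shadowCount M Q : ℝ) ≤ β * d

/-- Optimal value of the node-disjoint paths problem. -/
noncomputable def OPTn {V : Type*} (G : SimpleGraph V) (M : Finset (V × V)) : ℕ :=
  sSup {k | ∃ M' ⊆ M, M'.card = k ∧ NodeDisjointRoutable G M'}

def InGrid (ℓ : ℕ) (v : Vtx) : Prop := 1 ≤ v.1 ∧ v.1 ≤ ℓ ∧ 1 ≤ v.2 ∧ v.2 ≤ ℓ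

/-! ### Sparse digraphs have large independent sets -/

/-- If every vertex of `S` has at most `d` out-neighbours in `S`, then `S` contains an independent set
of size at least `|S| / (2d + 1)`: some vertex of `S` has in-degree at most `d`
inside `S`; select it and discard its at most `2d` neighbours. -/
lemma exists_independent {ι : Type*} [DecidableEq ι] (R : ι → ι → Prop) [DecidableRel R] (d : ℕ)
    (S : Finset ι) (hR : ∀ i ∈ S, (S.filter (R i)).card ≤ d) :
    ∃ I ⊆ S, S.card ≤ (2 * d + 1) * I.card ∧ ∀ i ∈ I, ∀ j ∈ I, i ≠ j → ¬ R i j := by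
  induction S using Finset.strongInduction with
  | H S ih =>
    rcases S.eq_empty_or_nonempty with rfl | hne
    · exact ⟨∅, by simp⟩
    have hdeg : ∃ v ∈ S, (S.filter (fun i => R i v)).card ≤ d := by
      by_contra! hcon
      have h1 : ∑ v ∈ S, (S.filter (fun i => R i v)).card = ∑ i ∈ S, (S.filter (R i)).card := by
        simp only [Finset.card_filter]
        exact Finset.sum_comm
      have h2 : ∑ v ∈ S, d < ∑ v ∈ S, (S.filter (fun i => R i v)).card :=
        Finset.sum_lt_sum_of_nonempty hne hcon
      have h3 : ∑ i ∈ S, (S.filter (R i)).card ≤ ∑ i ∈ S, d := Finset.sum_le_sum hR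
      omega
    obtain ⟨v, hv, hin⟩ := hdeg
    set N := insert v (S.filter (R v) ∪ S.filter (fun i => R i v)) with hN
    have hNcard : N.card ≤ 2 * d + 1 := by
      have h1 := Finset.card_insert_le v (S.filter (R v) ∪ S.filter (fun i => R i v))
      have h2 := Finset.card_union_le (S.filter (R v)) (S.filter (fun i => R i v))
      have h3 := hR v hv
      rw [← hN] at h1
      omega
    have hvN : v ∈ N := by simp [hN]
    have hss : S \ N ⊂ S := by
      refine ⟨Finset.sdiff_subset, fun h => ?_⟩
      have := h hv
      simp [hvN] at this
    obtain ⟨I, hIS, hcard, hI⟩ := ih (S \ N) hss (fun i hi =>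
      (Finset.card_le_card (Finset.filter_subset_filter _ hss.1)).trans (hR i (hss.1 hi)))
    have hfar : ∀ i ∈ I, i ∈ S ∧ i ≠ v ∧ ¬ R v i ∧ ¬ R i v := by
      intro i hi
      have := hIS hi
      simp only [hN, Finset.mem_sdiff, Finset.mem_insert, Finset.mem_union, Finset.mem_filter] at this
      tauto
    refine ⟨insert v I, ?_, ?_, ?_⟩
    · exact Finset.insert_subset hv (fun i hi => (hfar i hi).1)
    · rw [Finset.card_insert_of_notMem (fun h => (hfar v h).2.1 rfl)]
      have := Finset.card_le_card_sdiff_add_card (s := S) (t := N)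
      nlinarith
    · intro i hi j hj hij
      rw [Finset.mem_insert] at hi hj
      rcases hi with rfl | hi <;> rcases hj with rfl | hj
      · exact absurd rfl hij
      · exact (hfar j hj).2.2.1
      · exact (hfar i hi).2.2.2
      · exact hI i hi j hj hij

/-! ### Distances and segments in the grid -/

/-- The L1 distance of two vertices, written with truncated subtraction. -/
def l1 (u v : Vtx) : ℕ := (u.1 - v.1) + (v.1 - u.1) + ((u.2 - v.2) + (v.2 - u.2))

/-- `x` lies in the bounding box of `u` and `v`; for two vertices on a common row or column, this
is the segment between them. -/
def InBox (u v x : Vtx) : Prop :=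
  min u.1 v.1 ≤ x.1 ∧ x.1 ≤ max u.1 v.1 ∧ min u.2 v.2 ≤ x.2 ∧ x.2 ≤ max u.2 v.2

lemma gridG_adj {ℓ : ℕ} {u v : Vtx} :
    (gridG ℓ).Adj u v ↔ InGrid ℓ u ∧ InGrid ℓ v ∧ l1 u v = 1 := by
  obtain ⟨a, b⟩ := u
  obtain ⟨c, d⟩ := v
  simp only [gridG, rectGrid, SimpleGraph.fromRel_adj, InGrid, l1, ne_eq, Prod.mk.injEq]
  omega

lemma l1_le_length {ℓ : ℕ} {u v : Vtx} (p : (gridG ℓ).Walk u v) : l1 u v ≤ p.length := by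
  induction p with
  | nil => simp [l1]
  | cons h p ih =>
    have := (gridG_adj.1 h).2.2
    simp only [SimpleGraph.Walk.length_cons]
    simp only [l1] at *
    omega

/-- Monotone walks: two grid vertices are joined by a walk of length their L1 distance inside their
bounding box; if they share a row or column, it covers the segment between them. -/
lemma exists_box_walk {ℓ : ℕ} (n : ℕ) : ∀ u v : Vtx, InGrid ℓ u → InGrid ℓ v → l1 u v = n →
    ∃ p : (gridG ℓ).Walk u v, p.length = n ∧ (∀ x ∈ p.support, InBox u v x) ∧
      ((u.1 = v.1 ∨ u.2 = v.2) → ∀ x, InBox u v x → x ∈ p.support) := by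
  induction n with
  | zero =>
    intro u v hu hv h
    have huv : u = v := by
      simp only [l1] at h
      ext <;> omega
    subst huv
    refine ⟨.nil, rfl, by simp [InBox], fun _ x hx => ?_⟩
    have hxu : x = u := by
      simp only [InBox] at hx
      ext <;> omega
    simp [hxu]
  | succ n ih =>
    intro u v hu hv h
    -- a neighbour `w` of `u` that is one step closer to `v`
    have hw : ∃ w : Vtx, InGrid ℓ w ∧ l1 u w = 1 ∧ l1 w v = n ∧ InBox u v w := by
      obtain ⟨a, b⟩ := u
      obtain ⟨c, d⟩ := v
      simp only [l1, InGrid, InBox] at *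
      rcases lt_trichotomy a c with h1 | h1 | h1
      · exact ⟨(a + 1, b), by dsimp only; omega⟩
      · rcases lt_or_ge b d with h2 | h2
        · exact ⟨(a, b + 1), by dsimp only; omega⟩
        · exact ⟨(a, b - 1), by dsimp only; omega⟩
      · exact ⟨(a - 1, b), by dsimp only; omega⟩
    obtain ⟨w, hwG, huw, hwv, hbox⟩ := hw
    obtain ⟨p, hlen, hp, hp'⟩ := ih w v hwG hv hwv
    refine ⟨.cons (gridG_adj.2 ⟨hu, hwG, huw⟩) p, by simp [hlen], ?_, ?_⟩
    · intro x hx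
      rw [SimpleGraph.Walk.support_cons, List.mem_cons] at hx
      rcases hx with rfl | hx
      · simp [InBox]
      · have := hp x hx
        clear hp hp' ih
        simp only [InBox] at *
        omega
    · intro hst x hx
      rw [SimpleGraph.Walk.support_cons, List.mem_cons]
      by_cases hxu : x = u
      · exact Or.inl hxu
      · right
        rw [Prod.ext_iff] at hxu
        clear hp ih
        simp only [InBox, l1, InGrid] at *
        exact hp' (by omega) x (by omega)

lemma gridG_dist {ℓ : ℕ} {u v : Vtx} (hu : InGrid ℓ u) (hv : InGrid ℓ v) :
    (gridG ℓ).dist u v = l1 u v := by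
  obtain ⟨p, hp, -, -⟩ := exists_box_walk _ u v hu hv rfl
  obtain ⟨q, hq⟩ := p.reachable.exists_walk_length_eq_dist
  have h1 := l1_le_length q
  have h2 := SimpleGraph.dist_le p
  omega

/-- The vertex `b` is a boundary vertex at minimum L1 distance from the grid vertex `s`: its distance
from `s` is at most the distance from `s` to each of the four sides. -/
def IsNearest (ℓ : ℕ) (s b : Vtx) : Prop :=
  InGrid ℓ s ∧ OnBoundary ℓ b ∧
    l1 s b ≤ s.1 - 1 ∧ l1 s b ≤ ℓ - s.1 ∧ l1 s b ≤ s.2 - 1 ∧ l1 s b ≤ ℓ - s.2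

lemma isNearest_of_dist {ℓ : ℕ} {s b : Vtx} (hs : InGrid ℓ s) (hb : OnBoundary ℓ b)
    (h : ∀ b' : Vtx, OnBoundary ℓ b' → (gridG ℓ).dist s b ≤ (gridG ℓ).dist s b') :
    IsNearest ℓ s b := by
  have hG : ∀ b' : Vtx, OnBoundary ℓ b' → InGrid ℓ b' :=
    fun b' hb' => ⟨hb'.1, hb'.2.1, hb'.2.2.1, hb'.2.2.2.1⟩
  have key : ∀ b' : Vtx, OnBoundary ℓ b' → l1 s b ≤ l1 s b' := by
    intro b' hb'
    have := h b' hb'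
    rwa [gridG_dist hs (hG b hb), gridG_dist hs (hG b' hb')] at this
  refine ⟨hs, hb, ?_⟩
  obtain ⟨h1, h2, h3, h4⟩ := hs
  have k1 := key (1, s.2) ⟨by simp, by dsimp; omega, h3, h4, by simp⟩
  have k2 := key (ℓ, s.2) ⟨by dsimp; omega, by simp, h3, h4, by simp⟩
  have k3 := key (s.1, 1) ⟨h1, h2, by simp, by dsimp; omega, by simp⟩
  have k4 := key (s.1, ℓ) ⟨h1, h2, by dsimp; omega, by simp, by simp⟩
  simp only [l1] at *
  omega

/-- A nearest boundary vertex is the foot of the perpendicular to the side it lies on, and that side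
is a nearest one. -/
lemma IsNearest.cases {ℓ : ℕ} {s b : Vtx} (h : IsNearest ℓ s b) :
    (b = (1, s.2) ∧ s.1 ≤ s.2 ∧ s.1 + s.2 ≤ ℓ + 1) ∨
    (b = (ℓ, s.2) ∧ s.2 ≤ s.1 ∧ ℓ + 1 ≤ s.1 + s.2) ∨
    (b = (s.1, 1) ∧ s.2 ≤ s.1 ∧ s.1 + s.2 ≤ ℓ + 1) ∨
    (b = (s.1, ℓ) ∧ s.1 ≤ s.2 ∧ ℓ + 1 ≤ s.1 + s.2) := by
  obtain ⟨⟨_, _, _, _⟩, ⟨_, _, _, _, hb⟩, _, _, _, _⟩ := h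
  obtain ⟨a, c⟩ := s
  obtain ⟨e, f⟩ := b
  simp only [l1, Prod.mk.injEq] at *
  rcases hb with rfl | rfl | rfl | rfl
  · left; omega
  · right; left; omega
  · right; right; left; omega
  · right; right; right; omega

/-- Two segments from a vertex to a nearest boundary vertex can only meet if one of them contains
the inner end of the other. -/
lemma box_inter {ℓ : ℕ} {s b s' b' x : Vtx} (h : IsNearest ℓ s b) (h' : IsNearest ℓ s' b')
    (hx : InBox s b x) (hx' : InBox s' b' x) : InBox s b s' ∨ InBox s' b' s := by
  have hs := h.1
  have hs' := h'.1
  have hc := h.cases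
  have hc' := h'.cases
  clear h h'
  simp only [InBox, InGrid] at *
  rcases hc with ⟨rfl, _, _⟩ | ⟨rfl, _, _⟩ | ⟨rfl, _, _⟩ | ⟨rfl, _, _⟩ <;>
  rcases hc' with ⟨rfl, _, _⟩ | ⟨rfl, _, _⟩ | ⟨rfl, _, _⟩ | ⟨rfl, _, _⟩ <;>
  dsimp only at * <;> omega

/-! ### Rerouting -/

/-- A walk of length at most `d` starting on `P i` meets at most `d` other members of a family `P` of
pairwise disjoint sets. -/
lemma card_hit_le {V ι : Type*} [DecidableEq V] [Fintype ι] [DecidableEq ι] {G : SimpleGraph V}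
    (P : ι → Set V) (hP : ∀ i j, i ≠ j → ∀ x, x ∈ P i → x ∉ P j) (i : ι) {u v : V}
    (q : G.Walk u v) (d : ℕ) (hq : q.length ≤ d) (hu : u ∈ P i)
    [DecidablePred fun j => i ≠ j ∧ ∃ x ∈ q.support, x ∈ P j] :
    (Finset.univ.filter fun j => i ≠ j ∧ ∃ x ∈ q.support, x ∈ P j).card ≤ d := by
  have hcard : (q.support.toFinset.erase u).card ≤ d := by
    rw [Finset.card_erase_of_mem (by simp)]
    have := q.support.toFinset_card_le
    rw [SimpleGraph.Walk.length_support] at this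
    omega
  refine le_trans ?_ hcard
  have hex : ∀ j, ∃ x, (i ≠ j ∧ ∃ x ∈ q.support, x ∈ P j) → x ∈ q.support ∧ x ∈ P j := by
    intro j
    by_cases h : i ≠ j ∧ ∃ x ∈ q.support, x ∈ P j
    · obtain ⟨x, hx⟩ := h.2
      exact ⟨x, fun _ => hx⟩
    · exact ⟨u, fun h' => absurd h' h⟩
  choose f hf using hex
  refine Finset.card_le_card_of_injOn f ?_ ?_
  · intro j hj
    have hj : i ≠ j ∧ ∃ x ∈ q.support, x ∈ P j := by simpa using hj
    have h := hf j hj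
    simp only [Finset.coe_erase, Set.mem_sdiff, Finset.mem_coe, List.mem_toFinset,
      Set.mem_singleton_iff]
    exact ⟨h.1, fun he => hP i j hj.1 u hu (he ▸ h.2)⟩
  · intro j hj j' hj' he
    have h := (hf j (by simpa using hj)).2
    have h' := (hf j' (by simpa using hj')).2
    by_contra hne
    exact hP j j' hne _ h (he ▸ h')

lemma bddAbove_routable {V : Type*} (G : SimpleGraph V) (M : Finset (V × V)) :
    BddAbove {k | ∃ M' ⊆ M, M'.card = k ∧ NodeDisjointRoutable G M'} := by
  refine ⟨M.card, ?_⟩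
  rintro k ⟨M', hM', rfl, -⟩
  exact Finset.card_le_card hM'

lemma exists_optimal {V : Type*} (G : SimpleGraph V) (M : Finset (V × V)) :
    ∃ M' ⊆ M, M'.card = OPTn G M ∧ NodeDisjointRoutable G M' :=
  Nat.sSup_mem (s := {k | ∃ M' ⊆ M, M'.card = k ∧ NodeDisjointRoutable G M'})
    ⟨0, ∅, by simp, by simp, fun m => absurd m.2 (Finset.notMem_empty _),
      fun m => absurd m.2 (Finset.notMem_empty _), fun m => absurd m.2 (Finset.notMem_empty _)⟩ (bddAbove_routable G M)

/-- The combinatorial core: a factor `2δ + 1` is lost by relocating the sources. -/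
lemma opt_le {ℓ δ : ℕ} (M : Finset DPair) (hD : DistinctDests M)
    (tilde : Vtx → Vtx)
    (ht : ∀ p ∈ M, IsNearest ℓ p.1 (tilde p.1) ∧ l1 p.1 (tilde p.1) ≤ δ) :
    OPTn (gridG ℓ) M ≤
      (2 * δ + 1) * OPTn (gridG ℓ) (M.image (fun p => (tilde p.1, p.2))) := by
  classical
  obtain ⟨M', hM', hcard, P, -, hdisj⟩ := exists_optimal (gridG ℓ) M
  have hQ : ∀ m : {m // m ∈ M'}, ∃ q : (gridG ℓ).Walk m.val.1 (tilde m.val.1),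
      q.length = l1 m.val.1 (tilde m.val.1) ∧
      ∀ x, x ∈ q.support ↔ InBox m.val.1 (tilde m.val.1) x := by
    intro m
    have hn := (ht m.1 (hM' m.2)).1
    obtain ⟨q, h1, h2, h3⟩ := exists_box_walk (ℓ := ℓ) _ m.val.1 (tilde m.val.1) hn.1
      ⟨hn.2.1.1, hn.2.1.2.1, hn.2.1.2.2.1, hn.2.1.2.2.2.1⟩ rfl
    refine ⟨q, h1, fun x => ⟨h2 x, h3 ?_ x⟩⟩
    rcases hn.cases with h | h | h | h <;> simp [h.1]
  choose Q hlen hsupp using hQ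
  -- `R i j`: the segment of pair `i` meets the path of pair `j`
  let R : {m // m ∈ M'} → {m // m ∈ M'} → Prop :=
    fun i j => i ≠ j ∧ ∃ x ∈ (Q i).support, x ∈ {y | y ∈ (P j).support}
  have hR : ∀ i ∈ (Finset.univ : Finset {m // m ∈ M'}), (Finset.univ.filter (R i)).card ≤ δ :=
    fun i _ => card_hit_le (fun j => {y | y ∈ (P j).support}) hdisj i (Q i) δ
      ((hlen i).trans_le (ht i.1 (hM' i.2)).2) (P i).start_mem_support
  obtain ⟨I, -, hIcard, hI⟩ := exists_independent R δ Finset.univ hR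
  have hnohit : ∀ i ∈ I, ∀ j ∈ I, i ≠ j → ∀ x ∈ (Q i).support, x ∉ (P j).support :=
    fun i hi j hj hij x hx hx' => hI i hi j hj hij ⟨hij, x, hx, hx'⟩
  let W : ∀ i : {m // m ∈ M'}, (gridG ℓ).Walk (tilde i.val.1) i.val.2 :=
    fun i => ((Q i).reverse.append (P i)).bypass
  have hW : ∀ i x, x ∈ (W i).support → x ∈ (Q i).support ∨ x ∈ (P i).support := by
    intro i x hx
    have := SimpleGraph.Walk.support_bypass_subset_support _ hx
    simpa [SimpleGraph.Walk.mem_support_append_iff] using this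
  have hWdisj : ∀ i ∈ I, ∀ j ∈ I, i ≠ j → ∀ x, x ∈ (W i).support → x ∉ (W j).support := by
    intro i hi j hj hij x hx hx'
    rcases hW i x hx with h | h <;> rcases hW j x hx' with h' | h'
    · rcases box_inter (ht i.1 (hM' i.2)).1 (ht j.1 (hM' j.2)).1 ((hsupp i x).1 h)
        ((hsupp j x).1 h') with hb | hb
      · exact hnohit i hi j hj hij _ ((hsupp i _).2 hb) (P j).start_mem_support
      · exact hnohit j hj i hi hij.symm _ ((hsupp j _).2 hb) (P i).start_mem_support
    · exact hnohit i hi j hj hij x h h'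
    · exact hnohit j hj i hi hij.symm x h' h
    · exact hdisj i j hij x h h'
  let φ : {m // m ∈ M'} → DPair := fun i => (tilde i.val.1, i.val.2)
  have hφ : Function.Injective φ := fun i j hij =>
    Subtype.ext (hD _ (hM' i.2) _ (hM' j.2) (Prod.ext_iff.1 hij).2)
  have hroute : NodeDisjointRoutable (gridG ℓ) (I.image φ) := by
    have hpre : ∀ m : {m // m ∈ I.image φ}, ∃ i ∈ I, φ i = m.val :=
      fun m => Finset.mem_image.1 m.2
    choose f hfI hf using hpre
    refine ⟨fun m => (W (f m)).copy (Prod.ext_iff.1 (hf m)).1 (Prod.ext_iff.1 (hf m)).2, ?_, ?_⟩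
    · intro m
      rw [SimpleGraph.Walk.isPath_copy]
      exact SimpleGraph.Walk.bypass_isPath _
    · intro m m' hne x
      rw [SimpleGraph.Walk.support_copy, SimpleGraph.Walk.support_copy]
      refine hWdisj _ (hfI m) _ (hfI m') (fun he => hne (Subtype.ext ?_)) x
      rw [← hf m, ← hf m', he]
  have hle : I.card ≤ OPTn (gridG ℓ) (M.image (fun p => (tilde p.1, p.2))) := by
    refine le_csSup (bddAbove_routable _ _) ⟨I.image φ, ?_, Finset.card_image_of_injective I hφ, hroute⟩
    intro m hm
    obtain ⟨i, -, rfl⟩ := Finset.mem_image.1 hm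
    exact Finset.mem_image.2 ⟨i.val, hM' i.2, rfl⟩
  rw [← hcard]
  rw [Finset.card_univ, Fintype.card_coe] at hIcard
  exact hIcard.trans (Nat.mul_le_mul_left _ hle)

/-- Claim: relocating sources lying close to the grid boundary onto the
boundary loses at most a `δ` factor, up to a universal constant. -/
theorem statement14 :
    ∃ c : ℝ, 0 < c ∧ ∀ ℓ δ : ℕ, 2 ≤ ℓ → 1 ≤ δ →
      ∀ M : Finset DPair,
        (∀ p ∈ M, InGrid ℓ p.1 ∧ InGrid ℓ p.2) →
        DistinctSources M → DistinctDests M →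
        ∀ tilde : Vtx → Vtx,
          (∀ p ∈ M, OnBoundary ℓ (tilde p.1) ∧
            (∀ b : Vtx, OnBoundary ℓ b →
              (gridG ℓ).dist p.1 (tilde p.1) ≤ (gridG ℓ).dist p.1 b) ∧
            (gridG ℓ).dist p.1 (tilde p.1) ≤ δ) →
          c * (OPTn (gridG ℓ) M : ℝ) / (δ : ℝ) ≤
            (OPTn (gridG ℓ) (M.image (fun p => (tilde p.1, p.2))) : ℝ) := by
  refine ⟨1 / 3, by norm_num, fun ℓ δ _ hδ M hM _ hD tilde ht => ?_⟩
  have h := opt_le (δ := δ) M hD tilde (fun p hp => by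
    obtain ⟨hb, hmin, hle⟩ := ht p hp
    refine ⟨isNearest_of_dist (hM p hp).1 hb hmin, ?_⟩
    rwa [gridG_dist (hM p hp).1 ⟨hb.1, hb.2.1, hb.2.2.1, hb.2.2.2.1⟩] at hle)
  have hδ' : (1 : ℝ) ≤ δ := by exact_mod_cast hδ
  rw [div_le_iff₀ (by linarith)]
  have h' : (OPTn (gridG ℓ) M : ℝ) ≤
      (2 * δ + 1) * OPTn (gridG ℓ) (M.image (fun p => (tilde p.1, p.2))) := by
    exact_mod_cast h
  have h0 : (0 : ℝ) ≤ OPTn (gridG ℓ) (M.image (fun p => (tilde p.1, p.2))) := Nat.cast_nonneg _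
  -- `2δ + 1 ≤ 3δ` since `δ ≥ 1`
  nlinarith
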